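/- arXiv:1509.02226 — 2 statements merged into one kernel-verified Lean document; each statement's English description precedes it below -/
import Mathlib

section
/- Local Lipschitz monotonicity of the eigenvalues: let x ≤ y be real numbers such that for every m ∈ {0,…,n−1} the fractional parts satisfy {y + mα} − {x + mα} = y − x (i.e. no point of the trajectory crosses an integer between x and y). Then for every 0 ≤ l ≤ n − 1, the ordered eigenvalues of the periodic restriction satisfy λ γ₋ (y − x) ≤ μ̃_l(y) − μ̃_l(x) ≤ λ γ₊ (y − x). -/
/-! Shifting the phase from `x` to `y` changes `periodicMat` only on the diagonal, and since no
trajectory point crosses an integer, each diagonal entry grows by an amount between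
`lam * γm * (y - x)` and `lam * γp * (y - x)` (`potential_increment`). Both bounds therefore follow
from Weyl's inequality (`sortedEigs_le_add`): if the quadratic form of a symmetric `B` exceeds that
of a symmetric `A` by at most `c * ‖w‖²`, with `c` of either sign, then every ordered eigenvalue of
`B` is at most that of `A` plus `c`.

Weyl's inequality is obtained by dimension counting. There are `n - 1` linear conditions requiring
`w` to be orthogonal to the eigenvectors of `A` with index above `l` and to those of `B` with index
below `l`, so some `w ≠ 0` meets them all; for it the form of `A` is at most `μ_l(A) ‖w‖²` and the
form of `B` at least `μ_l(B) ‖w‖²`. -/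

open MeasureTheory Filter

noncomputable section

/-- The periodic restriction `H̃_n(x)`: the `n × n` symmetric matrix with diagonal entries
`λ v(x + mα)` and entries `1` at positions `(m, (m ± 1) mod n)`. -/
noncomputable def periodicMat (lam : ℝ) (v : ℝ → ℝ) (α : ℝ) (n : ℕ) (x : ℝ) :
    Matrix (Fin n) (Fin n) ℝ :=
  fun i j =>
    if i = j then lam * v (x + ((i : ℕ) : ℝ) * α)
    else if (j : ℕ) = ((i : ℕ) + 1) % n ∨ (j : ℕ) = ((i : ℕ) + n - 1) % n then 1 else 0

/-- The `l`-th eigenvalue of `M` (roots of the characteristic polynomial with multiplicity),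
in nondecreasing order. -/
noncomputable def sortedEigs {n : ℕ} (M : Matrix (Fin n) (Fin n) ℝ) (l : ℕ) : ℝ :=
  (((Matrix.charpoly M).roots).sort (· ≤ ·)).getD l 0


open Matrix in
/-- Spectral decomposition of the quadratic form of a real symmetric matrix, with the eigenvalues
enumerated as in `sortedEigs`. The `u i` are orthonormal eigenvectors; only Parseval's identity and
the diagonalization of the form are recorded. -/
lemma exists_sorted_diagonalization {n : ℕ} {A : Matrix (Fin n) (Fin n) ℝ} (hA : A.IsHermitian) :
    ∃ (a : Fin n → ℝ) (u : Fin n → Fin n → ℝ), Monotone a ∧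
      (∀ l : Fin n, sortedEigs A l = a l) ∧
      (∀ w : Fin n → ℝ, w ⬝ᵥ w = ∑ i, (u i ⬝ᵥ w) ^ 2) ∧
      (∀ w : Fin n → ℝ, w ⬝ᵥ (A *ᵥ w) = ∑ i, a i * (u i ⬝ᵥ w) ^ 2) := by
  set σ := Tuple.sort hA.eigenvalues with hσ
  have hmon : Monotone (hA.eigenvalues ∘ σ) := Tuple.monotone_sort _
  set b := hA.eigenvectorBasis with hb
  have hinner : ∀ (w : Fin n → ℝ) (i : Fin n),
      inner ℝ (b i) (WithLp.toLp 2 w) = (b i).ofLp ⬝ᵥ w := by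
    intro w i
    simp [EuclideanSpace.inner_eq_star_dotProduct, dotProduct_comm]
  refine ⟨hA.eigenvalues ∘ σ, fun i => (b (σ i)).ofLp, hmon, ?_, ?_, ?_⟩
  · intro l
    have hroots : A.charpoly.roots = (List.ofFn (hA.eigenvalues ∘ σ) : Multiset ℝ) := by
      rw [hA.roots_charpoly_eq_eigenvalues, ← Fin.univ_val_map,
        ← Multiset.map_map hA.eigenvalues σ, ← Equiv.coe_toEmbedding, ← Finset.map_val,
        Finset.map_univ_equiv]
      rfl
    have hsort : (A.charpoly.roots).sort (· ≤ ·) = List.ofFn (hA.eigenvalues ∘ σ) := by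
      rw [hroots, Multiset.coe_sort]
      apply List.mergeSort_of_pairwise
      simpa using hmon.sortedLE_ofFn.pairwise
    simp [sortedEigs, hsort]
  · intro w
    rw [Equiv.sum_comp σ (fun i => ((b i).ofLp ⬝ᵥ w) ^ 2)]
    have h := b.sum_inner_mul_inner (WithLp.toLp 2 w) (WithLp.toLp 2 w)
    simp only [real_inner_comm (b _) (WithLp.toLp 2 w), hinner] at h
    simp only [EuclideanSpace.inner_eq_star_dotProduct, star_trivial, ← pow_two] at h
    exact h.symm
  · intro w
    have hsum := Equiv.sum_comp σ (fun i => hA.eigenvalues i * ((b i).ofLp ⬝ᵥ w) ^ 2)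
    simp only [Function.comp_apply]
    rw [hsum]
    have h := b.sum_inner_mul_inner (WithLp.toLp 2 w) (WithLp.toLp 2 (A *ᵥ w))
    simp only [real_inner_comm (b _) (WithLp.toLp 2 w), hinner] at h
    -- Symmetry moves `A` onto the eigenvector.
    have hmove : ∀ i, (b i).ofLp ⬝ᵥ (A *ᵥ w) = hA.eigenvalues i * ((b i).ofLp ⬝ᵥ w) := by
      intro i
      have hT : Aᵀ = A := by simpa [Matrix.IsHermitian] using hA
      rw [dotProduct_mulVec, ← mulVec_transpose, hT, hA.mulVec_eigenvectorBasis, smul_dotProduct,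
        smul_eq_mul]
    simp only [hmove] at h
    rw [dotProduct_comm]
    simp only [EuclideanSpace.inner_eq_star_dotProduct, star_trivial] at h
    rw [← h]
    exact Finset.sum_congr rfl fun i _ => by ring

open Matrix in
/-- Weyl's inequality for a one-sided form bound; `c` may have either sign. -/
lemma sortedEigs_le_add {n : ℕ} {A B : Matrix (Fin n) (Fin n) ℝ}
    (hA : A.IsHermitian) (hB : B.IsHermitian) (c : ℝ)
    (h : ∀ w : Fin n → ℝ, w ⬝ᵥ (B *ᵥ w) ≤ w ⬝ᵥ (A *ᵥ w) + c * (w ⬝ᵥ w)) (l : Fin n) :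
    sortedEigs B l ≤ sortedEigs A l + c := by
  obtain ⟨a, u, ha, hla, hua, hqa⟩ := exists_sorted_diagonalization hA
  obtain ⟨b, z, hb, hlb, hzb, hqb⟩ := exists_sorted_diagonalization hB
  rw [hla, hlb]
  let f : (Fin n → ℝ) →ₗ[ℝ] ({i : Fin n // i ≠ l} → ℝ) :=
    LinearMap.pi fun i => dotProductBilin ℝ ℝ (if (i : Fin n) < l then z i else u i)
  have hker : LinearMap.ker f ≠ ⊥ := by
    apply LinearMap.ker_ne_bot_of_finrank_lt
    have := l.pos
    simp [Fintype.card_subtype_compl]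
    omega
  obtain ⟨w, hw, hw0⟩ := (Submodule.ne_bot_iff _).1 hker
  have hf : ∀ i : Fin n, i ≠ l → (if i < l then z i else u i) ⬝ᵥ w = 0 := fun i hi =>
    congrFun (LinearMap.mem_ker.1 hw) ⟨i, hi⟩
  have hpos : 0 < w ⬝ᵥ w := by
    simpa using dotProduct_star_self_pos_iff.2 hw0
  have h1 : w ⬝ᵥ (A *ᵥ w) ≤ a l * (w ⬝ᵥ w) := by
    rw [hqa, hua, Finset.mul_sum]
    refine Finset.sum_le_sum fun i _ => ?_
    rcases le_or_gt i l with hi | hi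
    · exact mul_le_mul_of_nonneg_right (ha hi) (sq_nonneg _)
    · have := hf i hi.ne'
      rw [if_neg hi.not_gt] at this
      simp [this]
  have h2 : b l * (w ⬝ᵥ w) ≤ w ⬝ᵥ (B *ᵥ w) := by
    rw [hqb, hzb, Finset.mul_sum]
    refine Finset.sum_le_sum fun i _ => ?_
    rcases le_or_gt l i with hi | hi
    · exact mul_le_mul_of_nonneg_right (hb hi) (sq_nonneg _)
    · have := hf i hi.ne
      rw [if_pos hi] at this
      simp [this]
  have h3 : b l * (w ⬝ᵥ w) ≤ (a l + c) * (w ⬝ᵥ w) := by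
    have := h w
    linarith
  exact le_of_mul_le_mul_right h3 hpos

lemma periodicMat_isHermitian (lam : ℝ) (v : ℝ → ℝ) (α : ℝ) (n : ℕ) (x : ℝ) :
    (periodicMat lam v α n x).IsHermitian := by
  -- `j` is the cyclic successor of `i` exactly when `i` is the cyclic predecessor of `j`.
  have key : ∀ i j : ℕ, i < n → j < n → j = (i + 1) % n → i = (j + n - 1) % n := by
    intro i j hi hj h
    rcases Nat.lt_or_ge (i + 1) n with h1 | h1
    · rw [Nat.mod_eq_of_lt h1] at h
      subst h
      rw [show i + 1 + n - 1 = i + n by omega, Nat.add_mod_right, Nat.mod_eq_of_lt hi]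
    · have : i + 1 = n := by omega
      rw [this, Nat.mod_self] at h
      subst h
      rw [Nat.mod_eq_of_lt (by omega)]
      omega
  have key' : ∀ i j : ℕ, i < n → j < n → j = (i + n - 1) % n → i = (j + 1) % n := by
    intro i j hi hj h
    rcases Nat.eq_zero_or_pos i with h1 | h1
    · subst h1
      rw [Nat.mod_eq_of_lt (by omega)] at h
      rw [show j + 1 = n by omega, Nat.mod_self]
    · rw [show i + n - 1 = (i - 1) + n by omega, Nat.add_mod_right,
        Nat.mod_eq_of_lt (by omega)] at h
      rw [show j + 1 = i by omega, Nat.mod_eq_of_lt hi]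
  ext i j
  simp only [Matrix.conjTranspose_apply, star_trivial, periodicMat]
  by_cases hij : i = j
  · subst hij; rfl
  · rw [if_neg hij, if_neg (Ne.symm hij)]
    refine if_congr ⟨?_, ?_⟩ rfl rfl
    · rintro (h | h)
      · exact Or.inr (key _ _ j.2 i.2 h)
      · exact Or.inl (key' _ _ j.2 i.2 h)
    · rintro (h | h)
      · exact Or.inr (key _ _ i.2 j.2 h)
      · exact Or.inl (key' _ _ i.2 j.2 h)

open Matrix in
/-- Changing the phase only changes the diagonal of `periodicMat`. -/
lemma periodicMat_form_diff (lam : ℝ) (v : ℝ → ℝ) (α : ℝ) (n : ℕ) (x y : ℝ) (w : Fin n → ℝ) :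
    w ⬝ᵥ (periodicMat lam v α n y *ᵥ w) = w ⬝ᵥ (periodicMat lam v α n x *ᵥ w) +
      ∑ i : Fin n, lam * (v (y + ((i : ℕ) : ℝ) * α) - v (x + ((i : ℕ) : ℝ) * α)) * w i ^ 2 := by
  have hM : periodicMat lam v α n y = periodicMat lam v α n x +
      diagonal fun i : Fin n =>
        lam * (v (y + ((i : ℕ) : ℝ) * α) - v (x + ((i : ℕ) : ℝ) * α)) := by
    ext i j
    by_cases hij : i = j
    · subst hij
      simp [periodicMat]
      ring
    · simp [periodicMat, hij]
  rw [hM, add_mulVec, dotProduct_add]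
  congr 1
  simp only [dotProduct, mulVec_diagonal]
  exact Finset.sum_congr rfl fun i _ => by ring

/-- Periodicity transports the two-sided Lipschitz bound from `[0, 1)` to points `s ≤ t` with no
integer crossing between them. -/
lemma potential_increment {γm γp : ℝ} {v : ℝ → ℝ} (hper : ∀ x : ℝ, v (x + 1) = v x)
    (hmono : ∀ x y : ℝ, 0 ≤ x → x ≤ y → y < 1 →
      γm * (y - x) ≤ v y - v x ∧ v y - v x ≤ γp * (y - x))
    {s t : ℝ} (hst : s ≤ t) (h : Int.fract t - Int.fract s = t - s) :
    γm * (t - s) ≤ v t - v s ∧ v t - v s ≤ γp * (t - s) := by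
  have hP : Function.Periodic v 1 := hper
  have hfract : ∀ r, v (Int.fract r) = v r := fun r => by
    have := hP.sub_int_mul_eq (x := r) ⌊r⌋
    rwa [mul_one] at this
  have := hmono (Int.fract s) (Int.fract t) (Int.fract_nonneg _) (by linarith) (Int.fract_lt_one _)
  rwa [hfract, hfract, h] at this

/-- local Lipschitz monotonicity of the eigenvalues of `H̃_n`. -/
theorem eigenvalues_local_lipschitz_monotone
    (α lam γm γp : ℝ) (v : ℝ → ℝ)
    (hα : Irrational α) (hlam : 0 < lam) (hγm : 0 < γm) (hγp : 0 < γp)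
    (hper : ∀ x : ℝ, v (x + 1) = v x) (hv0 : v 0 = 0)
    (hmono : ∀ x y : ℝ, 0 ≤ x → x ≤ y → y < 1 →
      γm * (y - x) ≤ v y - v x ∧ v y - v x ≤ γp * (y - x))
    (n : ℕ) (x y : ℝ) (hxy : x ≤ y)
    (hnocross : ∀ m : ℕ, m < n →
      Int.fract (y + (m : ℝ) * α) - Int.fract (x + (m : ℝ) * α) = y - x) :
    ∀ l : ℕ, l < n →
      lam * γm * (y - x)
          ≤ sortedEigs (periodicMat lam v α n y) l - sortedEigs (periodicMat lam v α n x) l ∧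
      sortedEigs (periodicMat lam v α n y) l - sortedEigs (periodicMat lam v α n x) l
          ≤ lam * γp * (y - x) := by
  intro l hl
  have hinc : ∀ i : Fin n, γm * (y - x) ≤ v (y + ((i : ℕ) : ℝ) * α) - v (x + ((i : ℕ) : ℝ) * α) ∧
      v (y + ((i : ℕ) : ℝ) * α) - v (x + ((i : ℕ) : ℝ) * α) ≤ γp * (y - x) := by
    intro i
    have h := potential_increment hper hmono (s := x + ((i : ℕ) : ℝ) * α)
      (t := y + ((i : ℕ) : ℝ) * α) (by linarith) (by rw [hnocross i i.2]; ring)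
    simpa using h
  have hx := periodicMat_isHermitian lam v α n x
  have hy := periodicMat_isHermitian lam v α n y
  constructor
  · have := sortedEigs_le_add hy hx (-(lam * γm * (y - x))) (fun w => ?_) ⟨l, hl⟩
    · simp only at this
      linarith
    · rw [periodicMat_form_diff lam v α n x y w]
      have hs : lam * γm * (y - x) * (dotProduct w w) ≤ ∑ i : Fin n,
          lam * (v (y + ((i : ℕ) : ℝ) * α) - v (x + ((i : ℕ) : ℝ) * α)) * w i ^ 2 := by
        rw [dotProduct, Finset.mul_sum]
        refine Finset.sum_le_sum fun i _ => ?_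
        rw [← pow_two, mul_assoc lam]
        gcongr
        exact (hinc i).1
      linarith
  · have := sortedEigs_le_add hx hy (lam * γp * (y - x)) (fun w => ?_) ⟨l, hl⟩
    · simp only at this
      linarith
    · rw [periodicMat_form_diff lam v α n x y w]
      gcongr
      rw [dotProduct, Finset.mul_sum]
      refine Finset.sum_le_sum fun i _ => ?_
      rw [← pow_two, mul_assoc lam γp]
      gcongr
      exact (hinc i).2

end
end

section
/- Uniform upper bound on determinants: let [E₁, E₂] be a compact interval on which γ(E) is continuous, and let κ > 0. Then there exists N ∈ ℕ such that for all n > N, all x ∈ ℝ, and all E ∈ [E₁, E₂], one has |P_n(x,E)| ≤ e^{n(γ(E) + κ)}. -/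
/-!
`P_n(x,E)` is, up to sign, the upper left entry of `M_n(x,E)` (`detP_eq`), so it is enough to bound
`log ‖M_n(x,E)‖` by `n (γ(E) + κ)` uniformly in `x` and `E`.

Fix an energy `E₀` and choose `m` with `(1/m) ∫ log ‖M_m(x,E₀)‖ dx < γ(E₀) + κ/8`. The function
`f(x) = log ‖M_m(x,E₀)‖` is bounded, `1`-periodic, and continuous except at the phases where some
`x + lα`, `l < m`, is an integer, so it has a continuous periodic majorant `g` of almost the same
integral (`exists_continuous_majorant`). Since `mα` is irrational, the Birkhoff averages of `g` under
the rotation by `mα` converge to `∫ g` uniformly in the starting point (`weyl_upper`).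
Cutting `[0, n)` into blocks of length `m` (`log_matNorm_block`) then bounds `log ‖M_n(x,E₀)‖`.

Because `‖M_m‖ ≥ 1`, `log ‖M_m(x,E)‖` is Lipschitz in `E` uniformly in `x`
(`log_matNorm_lipschitz`), so the same `m` and `g` serve all `E` near `E₀`; continuity of `γ` allows
`γ(E₀)` to be replaced by `γ(E) + κ/4` (`local_upper_bound`). Compactness of `[E₁, E₂]` gives a
common `N`.
-/

open MeasureTheory Filter

noncomputable section

/-- The `n`-step transfer matrix `M_n(x,E) = ∏_{l=n-1}^{0} [[E - λ v(x + lα), -1],[1, 0]]`. -/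
noncomputable def transferMat (lam : ℝ) (v : ℝ → ℝ) (α E x : ℝ) :
    ℕ → Matrix (Fin 2) (Fin 2) ℝ
  | 0 => 1
  | n + 1 => !![E - lam * v (x + (n : ℝ) * α), -1; 1, 0] * transferMat lam v α E x n

/-- A norm on 2×2 real matrices (Frobenius/Hilbert-Schmidt norm). -/
noncomputable def matNorm (M : Matrix (Fin 2) (Fin 2) ℝ) : ℝ :=
  Real.sqrt (∑ i, ∑ j, (M i j) ^ 2)

/-- The Lyapunov exponent `γ(E) = inf_{n ≥ 1} (1/n) ∫₀¹ ln ‖M_n(x,E)‖ dx`. -/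
noncomputable def lyap (lam : ℝ) (v : ℝ → ℝ) (α E : ℝ) : ℝ :=
  ⨅ n : ℕ+, (1 / (n : ℝ)) *
    ∫ x in (0:ℝ)..1, Real.log (matNorm (transferMat lam v α E x (n : ℕ)))

/-- The Dirichlet restriction `H_n(x)`: the `n × n` tridiagonal matrix with diagonal entries
`λ v(x + mα)` and entries `1` on the sub- and superdiagonals. -/
noncomputable def dirichletMat (lam : ℝ) (v : ℝ → ℝ) (α : ℝ) (n : ℕ) (x : ℝ) :
    Matrix (Fin n) (Fin n) ℝ :=
  fun i j =>
    if i = j then lam * v (x + ((i : ℕ) : ℝ) * α)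
    else if (j : ℕ) = (i : ℕ) + 1 ∨ (i : ℕ) = (j : ℕ) + 1 then 1 else 0

/-- `P_n(x,E) = det (H_n(x) - E)`. -/
noncomputable def detP (lam : ℝ) (v : ℝ → ℝ) (α : ℝ) (n : ℕ) (x E : ℝ) : ℝ :=
  (dirichletMat lam v α n x - E • (1 : Matrix (Fin n) (Fin n) ℝ)).det



/-! ### Uniform equidistribution of irrational rotations -/

/-- Weyl's theorem for continuous functions on the circle, uniformly in the starting point: the
exponentials are handled by a geometric sum, and their span is dense. -/
lemma weyl_circle (θ : ℝ) (hθ : Irrational θ) (g : C(AddCircle (1:ℝ), ℂ)) :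
    ∀ ε > 0, ∃ N : ℕ, ∀ n ≥ N, ∀ x : AddCircle (1:ℝ),
      ‖∑ j ∈ Finset.range n, g (x + ((j * θ : ℝ) : AddCircle (1:ℝ))) - n * ∫ y, g y‖ ≤ n * ε := by
  have hintegrable : ∀ f : C(AddCircle (1:ℝ), ℂ), Integrable (fun y => f y) := fun f =>
    f.continuous.integrable_of_hasCompactSupport (HasCompactSupport.of_compactSpace _)
  have hmem : g ∈ (Submodule.span ℂ (Set.range (@fourier (1:ℝ)))).topologicalClosure := by
    rw [span_fourier_closure_eq_top]; trivial
  have hspan : ∀ h ∈ Submodule.span ℂ (Set.range (@fourier (1:ℝ))),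
      ∀ ε > 0, ∃ N : ℕ, ∀ n ≥ N, ∀ x : AddCircle (1:ℝ),
      ‖∑ j ∈ Finset.range n, h (x + ((j * θ : ℝ) : AddCircle (1:ℝ))) - n * ∫ y, h y‖
        ≤ n * ε := by
    intro h hh
    induction hh using Submodule.span_induction with
    | mem f hf =>
      obtain ⟨k, rfl⟩ := hf
      intro ε hε
      by_cases hk : k = 0
      · subst hk
        refine ⟨0, fun n _ x => ?_⟩
        have h1 : ∫ y : AddCircle (1:ℝ), (fourier 0 y : ℂ) = 1 := by
          simp [Measure.real]
        rw [h1]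
        simp only [fourier_zero, Finset.sum_const, Finset.card_range, nsmul_eq_mul, sub_self,
          norm_zero]
        positivity
      · set z : ℂ := fourier k ((θ : ℝ) : AddCircle (1:ℝ)) with hz
        have hz1 : z ≠ 1 := by
          intro h1
          rw [hz, fourier_coe_apply, Complex.exp_eq_one_iff] at h1
          obtain ⟨m, hm⟩ := h1
          have h2 : ((k : ℝ) * θ : ℂ) = (m : ℝ) := by
            have hpi : (2 * Real.pi * Complex.I : ℂ) ≠ 0 := Complex.two_pi_I_ne_zero
            apply mul_right_cancel₀ hpi
            push_cast at hm ⊢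
            rw [← hm]; ring
          have h3 : (k : ℝ) * θ = m := by exact_mod_cast h2
          exact (hθ.intCast_mul hk).ne_int m h3
        have hadd : ∀ x y : AddCircle (1:ℝ),
            (fourier k (x + y) : ℂ) = fourier k x * fourier k y := by
          intro x y
          simp [fourier_apply, smul_add, AddCircle.toCircle_add]
        have hpow : ∀ j : ℕ, (fourier k ((j * θ : ℝ) : AddCircle (1:ℝ)) : ℂ) = z ^ j := by
          intro j
          induction j with
          | zero => simp
          | succ j ih =>
            have : (((j + 1 : ℕ) : ℝ) * θ : ℝ) = j * θ + θ := by push_cast; ring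
            rw [this, AddCircle.coe_add, hadd, ih, pow_succ]
        -- translation by `θ` multiplies the integral by `z ≠ 1`, so it vanishes
        have hint_zero : ∫ y : AddCircle (1:ℝ), (fourier k y : ℂ) = 0 := by
          have h1 := integral_add_right_eq_self (μ := (volume : Measure (AddCircle (1:ℝ))))
            (fun y => (fourier k y : ℂ)) ((θ : ℝ) : AddCircle (1:ℝ))
          simp only [hadd] at h1
          rw [integral_mul_const, ← hz] at h1
          have h2 : (∫ y : AddCircle (1:ℝ), (fourier k y : ℂ)) * (z - 1) = 0 := by
            rw [mul_sub, h1]; ring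
          exact (mul_eq_zero.1 h2).resolve_right (sub_ne_zero.2 hz1)
        have hnorm : ∀ x : AddCircle (1:ℝ), ‖(fourier k x : ℂ)‖ = 1 := by
          intro x; rw [fourier_apply]; exact Circle.norm_coe _
        have hpos : 0 < ‖z - 1‖ := norm_pos_iff.2 (sub_ne_zero.2 hz1)
        obtain ⟨N, hN⟩ := exists_nat_ge (2 / ‖z - 1‖ / ε)
        refine ⟨N, fun n hn x => ?_⟩
        rw [hint_zero, mul_zero, sub_zero]
        simp only [hadd, hpow]
        rw [← Finset.mul_sum, norm_mul, hnorm, one_mul, geom_sum_eq hz1, norm_div]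
        have h1 : ‖z ^ n - 1‖ ≤ 2 := by
          refine (norm_sub_le _ _).trans ?_
          rw [norm_pow, hz, hnorm]; norm_num
        have h2 : (N : ℝ) ≤ n := by exact_mod_cast hn
        calc ‖z ^ n - 1‖ / ‖z - 1‖ ≤ 2 / ‖z - 1‖ := by gcongr
          _ ≤ n * ε := by rw [div_le_iff₀ hε] at hN; nlinarith
    | zero =>
      intro ε hε
      refine ⟨0, fun n _ x => ?_⟩
      simp
      positivity
    | add f g _ _ hf hg =>
      intro ε hε
      obtain ⟨N₁, h₁⟩ := hf (ε / 2) (by positivity)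
      obtain ⟨N₂, h₂⟩ := hg (ε / 2) (by positivity)
      refine ⟨max N₁ N₂, fun n hn x => ?_⟩
      have e₁ := h₁ n (le_trans (le_max_left _ _) hn) x
      have e₂ := h₂ n (le_trans (le_max_right _ _) hn) x
      simp only [ContinuousMap.add_apply]
      rw [integral_add (hintegrable f) (hintegrable g), Finset.sum_add_distrib, mul_add, add_sub_add_comm]
      refine (norm_add_le _ _).trans ?_
      linarith
    | smul c f _ hf =>
      intro ε hε
      obtain ⟨N, h⟩ := hf (ε / (‖c‖ + 1)) (by positivity)
      refine ⟨N, fun n hn x => ?_⟩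
      have e := h n hn x
      simp only [ContinuousMap.smul_apply, smul_eq_mul]
      rw [integral_const_mul, ← Finset.mul_sum, mul_left_comm, ← mul_sub, norm_mul]
      calc _ ≤ ‖c‖ * (n * (ε / (‖c‖ + 1))) := by gcongr
        _ = n * ε * (‖c‖ / (‖c‖ + 1)) := by ring
        _ ≤ n * ε * 1 := by
          gcongr
          rw [div_le_one (by positivity)]; linarith
        _ = n * ε := mul_one _
  intro ε hε
  obtain ⟨h, hh, hgh⟩ := Metric.mem_closure_iff.1 hmem (ε / 3) (by positivity)
  obtain ⟨N, hN⟩ := hspan h hh (ε / 3) (by positivity)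
  refine ⟨N, fun n hn x => ?_⟩
  have hpt : ∀ y, ‖g y - h y‖ ≤ ε / 3 := fun y => by
    rw [← dist_eq_norm]; exact (ContinuousMap.dist_apply_le_dist y).trans hgh.le
  have e₁ : ‖∑ j ∈ Finset.range n, (g (x + ((j * θ : ℝ) : AddCircle (1:ℝ)))
      - h (x + ((j * θ : ℝ) : AddCircle (1:ℝ))))‖ ≤ n * (ε / 3) := by
    refine (norm_sum_le_of_le _ fun j _ => hpt _).trans ?_
    simp
  have e₂ : ‖∫ y, (g y - h y)‖ ≤ ε / 3 := by
    refine (norm_integral_le_of_norm_le_const (ae_of_all _ hpt)).trans ?_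
    simp [Measure.real]
  have e₃ := hN n hn x
  have : ∑ j ∈ Finset.range n, g (x + ((j * θ : ℝ) : AddCircle (1:ℝ))) - n * ∫ y, g y
      = ∑ j ∈ Finset.range n, (g (x + ((j * θ : ℝ) : AddCircle (1:ℝ)))
      - h (x + ((j * θ : ℝ) : AddCircle (1:ℝ))))
      + (∑ j ∈ Finset.range n, h (x + ((j * θ : ℝ) : AddCircle (1:ℝ))) - n * ∫ y, h y)
      - n * ∫ y, (g y - h y) := by
    rw [integral_sub (hintegrable g) (hintegrable h), Finset.sum_sub_distrib]; ring
  rw [this]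
  refine (norm_sub_le _ _).trans ((add_le_add_left (norm_add_le _ _) _).trans ?_)
  rw [norm_mul, Complex.norm_natCast]
  have : (n : ℝ) * ‖∫ y, (g y - h y)‖ ≤ n * (ε / 3) := by gcongr
  linarith

/-- One-sided form of `weyl_circle` for continuous `1`-periodic functions on `ℝ`. -/
lemma weyl_upper (θ : ℝ) (hθ : Irrational θ) (g : ℝ → ℝ) (hg : Continuous g)
    (hper : ∀ x, g (x + 1) = g x) (ε : ℝ) (hε : 0 < ε) :
    ∃ N : ℕ, ∀ n ≥ N, ∀ x : ℝ,
      ∑ j ∈ Finset.range n, g (x + j * θ) ≤ n * ((∫ y in (0:ℝ)..1, g y) + ε) := by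
  have hP : Function.Periodic (fun x => (g x : ℂ)) 1 := fun x => by simp [hper]
  let G : C(AddCircle (1:ℝ), ℂ) := ⟨hP.lift, by
    refine continuous_coinduced_dom.2 ?_
    exact Complex.continuous_ofReal.comp hg⟩
  have hG : ∀ x : ℝ, G (x : AddCircle (1:ℝ)) = g x := fun x => rfl
  have hI : ∫ y, G y = ((∫ y in (0:ℝ)..1, g y : ℝ) : ℂ) := by
    rw [← AddCircle.intervalIntegral_preimage 1 0, zero_add]
    simp only [hG]
    exact intervalIntegral.integral_ofReal
  obtain ⟨N, hN⟩ := weyl_circle θ hθ G ε hε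
  refine ⟨N, fun n hn x => ?_⟩
  have h := hN n hn (x : AddCircle (1:ℝ))
  simp only [← AddCircle.coe_add, hG] at h
  rw [hI] at h
  have h2 : ‖((∑ j ∈ Finset.range n, g (x + j * θ) - n * ∫ y in (0:ℝ)..1, g y : ℝ) : ℂ)‖
      ≤ n * ε := by
    push_cast; exact h
  rw [Complex.norm_real, Real.norm_eq_abs] at h2
  have := le_of_abs_le h2
  linarith

/-- A bounded periodic function whose discontinuities lie in the null zero set of a continuous periodic
`q ≥ 0` has continuous periodic majorants with almost the same integral. -/
lemma exists_continuous_majorant (f q : ℝ → ℝ) (C ε : ℝ) (hε : 0 < ε)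
    (hfC : ∀ x, |f x| ≤ C) (hfper : ∀ x, f (x + 1) = f x)
    (hq : Continuous q) (hqper : ∀ x, q (x + 1) = q x) (hq0 : ∀ x, 0 ≤ q x)
    (hcont : ∀ x, q x ≠ 0 → ContinuousAt f x) (hae : ∀ᵐ x : ℝ, q x ≠ 0) :
    ∃ g : ℝ → ℝ, Continuous g ∧ (∀ x, g (x + 1) = g x) ∧ (∀ x, f x ≤ g x) ∧
      ∫ x in (0:ℝ)..1, g x ≤ (∫ x in (0:ℝ)..1, f x) + ε := by
  -- `d k` equals `1` on the zero set of `q` and tends to `0` off it; the majorants `g k` interpolate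
  -- between the upper bound `C` and `f` with weight `d k`
  let d : ℕ → ℝ → ℝ := fun k x => max 0 (1 - k * q x)
  have hd0 : ∀ k x, 0 ≤ d k x := fun k x => le_max_left _ _
  have hd1 : ∀ k x, d k x ≤ 1 := fun k x =>
    max_le zero_le_one (by have := mul_nonneg (Nat.cast_nonneg (α := ℝ) k) (hq0 x); linarith)
  have hdc : ∀ k, Continuous (d k) := fun k => by fun_prop
  let g : ℕ → ℝ → ℝ := fun k x => C + (1 - d k x) * (f x - C)
  have hgc : ∀ k, Continuous (g k) := by
    intro k
    rw [continuous_iff_continuousAt]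
    intro x
    by_cases hx : q x = 0
    · have hdx : d k x = 1 := by simp [d, hx]
      have h0 : Tendsto (fun y => (1 - d k y)) (nhds x) (nhds 0) := by
        have := (tendsto_const_nhds (x := (1:ℝ))).sub ((hdc k).tendsto x)
        rwa [hdx, sub_self] at this
      have hb : Tendsto (fun y => (1 - d k y) * (f y - C)) (nhds x) (nhds 0) := by
        refine Tendsto.zero_mul_isBoundedUnder_le h0 ?_
        refine isBoundedUnder_of ⟨2 * C, fun y => ?_⟩
        have := abs_le.1 (hfC y)
        simp only [Function.comp, Real.norm_eq_abs]
        rw [abs_le]; constructor <;> linarith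
      have := hb.const_add C
      unfold ContinuousAt
      simpa [g, hdx] using this
    · have h1 := hcont x hx
      have h2 := (hdc k).continuousAt (x := x)
      exact continuousAt_const.add ((continuousAt_const.sub h2).mul (h1.sub continuousAt_const))
  have hlim : Tendsto (fun k => ∫ x in (0:ℝ)..1, g k x) atTop (nhds (∫ x in (0:ℝ)..1, f x)) := by
    refine intervalIntegral.tendsto_integral_filter_of_dominated_convergence (fun _ => 3 * C)
      (Eventually.of_forall fun k => (hgc k).aestronglyMeasurable) ?_ (by simp) ?_
    · refine Eventually.of_forall fun k => ae_of_all _ fun x _ => ?_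
      have h1 := abs_le.1 (hfC x)
      have h2 := hd0 k x
      have h3 := hd1 k x
      rw [Real.norm_eq_abs, abs_le]
      simp only [g]
      constructor <;> nlinarith
    · filter_upwards [hae] with x hx _
      refine tendsto_const_nhds.congr' ?_
      have hqx : 0 < q x := lt_of_le_of_ne (hq0 x) (Ne.symm hx)
      obtain ⟨K, hK⟩ := exists_nat_ge (1 / q x)
      filter_upwards [eventually_ge_atTop K] with k hk
      have hk' : (K : ℝ) ≤ k := by exact_mod_cast hk
      have : d k x = 0 := by
        refine max_eq_left ?_
        rw [div_le_iff₀ hqx] at hK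
        nlinarith
      simp [g, this]
  obtain ⟨k, hk⟩ := (hlim.eventually (gt_mem_nhds (lt_add_of_pos_right _ hε))).exists
  refine ⟨g k, hgc k, fun x => ?_, fun x => ?_, hk.le⟩
  · simp only [g, d, hfper, hqper]
  · have h1 := abs_le.1 (hfC x)
    have h2 := hd0 k x
    simp only [g]
    nlinarith

/-! ### Transfer matrices and determinants -/

open scoped Matrix.Norms.Frobenius

lemma matNorm_eq_norm (M : Matrix (Fin 2) (Fin 2) ℝ) : matNorm M = ‖M‖ := by
  rw [Matrix.frobenius_norm_def, matNorm, Real.sqrt_eq_rpow]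
  simp

lemma matNorm_mul_le (A B : Matrix (Fin 2) (Fin 2) ℝ) :
    matNorm (A * B) ≤ matNorm A * matNorm B := by
  simp only [matNorm_eq_norm]; exact norm_mul_le A B

lemma abs_entry_le_matNorm (M : Matrix (Fin 2) (Fin 2) ℝ) (i j : Fin 2) :
    |M i j| ≤ matNorm M := by
  refine Real.abs_le_sqrt ?_
  fin_cases i <;> fin_cases j <;> simp [Fin.sum_univ_two] <;>
    nlinarith [sq_nonneg (M 0 0), sq_nonneg (M 0 1), sq_nonneg (M 1 0), sq_nonneg (M 1 1)]

/-- `‖M‖² ≥ 2 |det M|` for the Frobenius norm of a `2 × 2` matrix. -/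
lemma one_le_matNorm (M : Matrix (Fin 2) (Fin 2) ℝ) (h : M.det = 1) : 1 ≤ matNorm M := by
  refine Real.one_le_sqrt.2 ?_
  rw [Matrix.det_fin_two] at h
  simp only [Fin.sum_univ_two]
  nlinarith [sq_nonneg (M 0 0 - M 1 1), sq_nonneg (M 0 1 + M 1 0)]

lemma matNorm_step_le (a : ℝ) : matNorm !![a, -1; 1, 0] ≤ |a| + 2 := by
  refine Real.sqrt_le_iff.2 ⟨by positivity, ?_⟩
  simp [Fin.sum_univ_two]
  nlinarith [sq_abs a, abs_nonneg a]

lemma det_transferMat (lam : ℝ) (v : ℝ → ℝ) (α E x : ℝ) (n : ℕ) :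
    (transferMat lam v α E x n).det = 1 := by
  induction n with
  | zero => simp [transferMat]
  | succ n ih => rw [transferMat, Matrix.det_mul, ih]; simp [Matrix.det_fin_two]

lemma one_le_matNorm_transferMat (lam : ℝ) (v : ℝ → ℝ) (α E x : ℝ) (n : ℕ) :
    1 ≤ matNorm (transferMat lam v α E x n) :=
  one_le_matNorm _ (det_transferMat lam v α E x n)

/-- The cocycle identity. -/
lemma transferMat_add (lam : ℝ) (v : ℝ → ℝ) (α E x : ℝ) (a b : ℕ) :
    transferMat lam v α E x (a + b) =
      transferMat lam v α E (x + a * α) b * transferMat lam v α E x a := by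
  induction b with
  | zero => simp [transferMat]
  | succ b ih =>
    rw [← add_assoc, transferMat, ih, transferMat, Matrix.mul_assoc]
    have : x + ((a + b : ℕ) : ℝ) * α = x + a * α + b * α := by push_cast; ring
    rw [this]

lemma transferMat_periodic (lam : ℝ) (v : ℝ → ℝ) (hper : ∀ x, v (x + 1) = v x)
    (α E x : ℝ) (n : ℕ) :
    transferMat lam v α E (x + 1) n = transferMat lam v α E x n := by
  induction n with
  | zero => rfl
  | succ n ih =>
    rw [transferMat, transferMat, ih, add_right_comm, hper]

/-- Expansion of the tridiagonal determinant along its first row. Deleting leading rows and columns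
of `H_n(x)` shifts the phase `x` by multiples of `α`. -/
lemma detP_succ_succ (lam : ℝ) (v : ℝ → ℝ) (α : ℝ) (n : ℕ) (x E : ℝ) :
    detP lam v α (n + 2) x E =
      (lam * v x - E) * detP lam v α (n + 1) (x + α) E - detP lam v α n (x + 2 * α) E := by
  have hs1 : ∀ i : ℕ, x + ((i + 1 : ℕ) : ℝ) * α = x + α + i * α := by
    intro i; push_cast; ring
  have hs2 : ∀ i : ℕ, x + ((i + 1 + 1 : ℕ) : ℝ) * α = x + 2 * α + i * α := by
    intro i; push_cast; ring
  unfold detP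
  rw [Matrix.det_succ_row_zero, Fin.sum_univ_succ, Fin.sum_univ_succ]
  -- only the columns `0` and `1` of the first row are nonzero
  have hz : ∑ j : Fin n, (-1 : ℝ) ^ ((j.succ.succ : Fin (n + 2)) : ℕ) *
      (dirichletMat lam v α (n + 2) x - E • (1 : Matrix (Fin (n + 2)) (Fin (n + 2)) ℝ))
        0 j.succ.succ *
      ((dirichletMat lam v α (n + 2) x - E • (1 : Matrix (Fin (n + 2)) (Fin (n + 2)) ℝ)).submatrix
        Fin.succ (j.succ.succ).succAbove).det = 0 := by
    refine Finset.sum_eq_zero fun j _ => ?_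
    have : (dirichletMat lam v α (n + 2) x - E • (1 : Matrix (Fin (n + 2)) (Fin (n + 2)) ℝ))
        0 j.succ.succ = 0 := by
      simp [dirichletMat, Fin.ext_iff]
    rw [this]; ring
  have h00 : (dirichletMat lam v α (n + 2) x - E • (1 : Matrix (Fin (n + 2)) (Fin (n + 2)) ℝ))
      0 0 = lam * v x - E := by
    simp [dirichletMat]
  have h01 : (dirichletMat lam v α (n + 2) x - E • (1 : Matrix (Fin (n + 2)) (Fin (n + 2)) ℝ))
      0 (Fin.succ 0) = 1 := by
    simp [dirichletMat]
  have hm0 : (dirichletMat lam v α (n + 2) x -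
        E • (1 : Matrix (Fin (n + 2)) (Fin (n + 2)) ℝ)).submatrix Fin.succ (Fin.succAbove 0) =
      dirichletMat lam v α (n + 1) (x + α) - E • (1 : Matrix (Fin (n + 1)) (Fin (n + 1)) ℝ) := by
    ext i j
    simp only [dirichletMat, Matrix.submatrix_apply, Matrix.sub_apply, Matrix.smul_apply,
      Matrix.one_apply, Fin.zero_succAbove, Fin.succ_inj, Fin.val_succ, hs1, add_left_inj]
  have hm1 : ((dirichletMat lam v α (n + 2) x -
        E • (1 : Matrix (Fin (n + 2)) (Fin (n + 2)) ℝ)).submatrix Fin.succ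
          (Fin.succAbove (Fin.succ 0))).det =
      (dirichletMat lam v α n (x + 2 * α) - E • (1 : Matrix (Fin n) (Fin n) ℝ)).det := by
    rw [Matrix.det_succ_column_zero, Fin.sum_univ_succ]
    -- the first column of this minor is `(1, 0, …, 0)`
    have hz' : ∀ i : Fin n, (dirichletMat lam v α (n + 2) x -
        E • (1 : Matrix (Fin (n + 2)) (Fin (n + 2)) ℝ)).submatrix Fin.succ
          (Fin.succAbove (Fin.succ 0)) i.succ 0 = 0 := by
      intro i
      simp [dirichletMat, Fin.ext_iff]
    have h10 : (dirichletMat lam v α (n + 2) x -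
        E • (1 : Matrix (Fin (n + 2)) (Fin (n + 2)) ℝ)).submatrix Fin.succ
          (Fin.succAbove (Fin.succ 0)) 0 0 = 1 := by
      simp [dirichletMat]
    have hm : ((dirichletMat lam v α (n + 2) x -
        E • (1 : Matrix (Fin (n + 2)) (Fin (n + 2)) ℝ)).submatrix Fin.succ
          (Fin.succAbove (Fin.succ 0))).submatrix (Fin.succAbove 0) Fin.succ =
        dirichletMat lam v α n (x + 2 * α) - E • (1 : Matrix (Fin n) (Fin n) ℝ) := by
      ext i j
      simp only [dirichletMat, Matrix.submatrix_apply, Matrix.sub_apply, Matrix.smul_apply,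
        Matrix.one_apply, Fin.zero_succAbove, Fin.succ_succAbove_succ, Fin.succ_inj, Fin.val_succ,
        hs2, add_left_inj]
    rw [h10, hm, Finset.sum_eq_zero fun i _ => by rw [hz']; ring]
    simp
  rw [hz, h00, h01, hm0, hm1]
  simp
  ring

/-- Up to sign, `P_n` is the upper left entry of the transfer matrix: both satisfy the recursion of
`detP_succ_succ`. -/
lemma detP_eq (lam : ℝ) (v : ℝ → ℝ) (α E : ℝ) (n : ℕ) :
    ∀ x, detP lam v α n x E = (-1) ^ n * transferMat lam v α E x n 0 0 := by
  have hA : ∀ (n : ℕ) (x : ℝ), transferMat lam v α E x (n + 1) =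
      transferMat lam v α E (x + α) n * !![E - lam * v x, -1; 1, 0] := by
    intro n x
    rw [add_comm, transferMat_add]
    simp [transferMat]
  induction n using Nat.twoStepInduction with
  | zero => intro x; simp [detP, transferMat]
  | one => intro x; simp [detP, transferMat, dirichletMat]
  | more n ih₀ ih₁ =>
    intro x
    rw [detP_succ_succ, ih₀, ih₁, hA (n + 1) x]
    have h01 : transferMat lam v α E (x + α) (n + 1) 0 1 =
        - transferMat lam v α E (x + 2 * α) n 0 0 := by
      rw [hA n (x + α), show x + α + α = x + 2 * α by ring]
      simp [Matrix.mul_apply, Fin.sum_univ_two]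
    have h00 : (transferMat lam v α E (x + α) (n + 1) * !![E - lam * v x, -1; 1, 0]) 0 0 =
        transferMat lam v α E (x + α) (n + 1) 0 0 * (E - lam * v x) +
        transferMat lam v α E (x + α) (n + 1) 0 1 := by
      simp [Matrix.mul_apply, Fin.sum_univ_two]
    rw [h00, h01]
    ring

lemma abs_detP_le (lam : ℝ) (v : ℝ → ℝ) (α E : ℝ) (n : ℕ) (x : ℝ) :
    |detP lam v α n x E| ≤ matNorm (transferMat lam v α E x n) := by
  rw [detP_eq, abs_mul, abs_pow, abs_neg, abs_one, one_pow, one_mul]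
  exact abs_entry_le_matNorm _ 0 0

/-! ### Bounds and regularity of `log ‖M_n(x,E)‖` -/

/-- A priori exponential growth bound; the factor `2` covers `‖M_0‖ = √2`. -/
lemma matNorm_transferMat_le (lam : ℝ) (v : ℝ → ℝ) (α V R : ℝ) (hlam : 0 < lam)
    (hV : ∀ x, |v x| ≤ V) (E : ℝ) (hE : |E| ≤ R) (x : ℝ) (n : ℕ) :
    matNorm (transferMat lam v α E x n) ≤ 2 * (R + lam * V + 2) ^ n := by
  induction n with
  | zero =>
    simp [transferMat, matNorm, Matrix.one_apply]
  | succ n ih =>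
    rw [transferMat]
    refine (matNorm_mul_le _ _).trans ?_
    have h1 : matNorm !![E - lam * v (x + n * α), -1; 1, 0] ≤ R + lam * V + 2 := by
      refine (matNorm_step_le _).trans ?_
      have := abs_sub E (lam * v (x + n * α))
      rw [abs_mul, abs_of_pos hlam] at this
      have := mul_le_mul_of_nonneg_left (hV (x + n * α)) hlam.le
      linarith
    have h0 : 0 ≤ matNorm !![E - lam * v (x + n * α), -1; 1, 0] := Real.sqrt_nonneg _
    calc _ ≤ (R + lam * V + 2) * (2 * (R + lam * V + 2) ^ n) := by
          apply mul_le_mul h1 ih (Real.sqrt_nonneg _) (h0.trans h1)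
      _ = _ := by ring

/-- `E ↦ M_n(x,E)` is Lipschitz on bounded sets, uniformly in the phase `x`. -/
lemma transferMat_lipschitz (lam : ℝ) (v : ℝ → ℝ) (α V R : ℝ) (hlam : 0 < lam)
    (hV : ∀ x, |v x| ≤ V) (n : ℕ) :
    ∃ L : ℝ, 0 ≤ L ∧ ∀ E E' : ℝ, |E| ≤ R → |E'| ≤ R → ∀ x,
      matNorm (transferMat lam v α E x n - transferMat lam v α E' x n) ≤ L * |E - E'| := by
  induction n with
  | zero => exact ⟨0, le_rfl, fun E E' _ _ x => by simp [transferMat, matNorm]⟩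
  | succ n ih =>
    obtain ⟨L, hL, h⟩ := ih
    have hV0 : 0 ≤ V := (abs_nonneg _).trans (hV 0)
    refine ⟨(|R| + lam * V + 2) * L + 2 * (|R| + lam * V + 2) ^ n, by positivity, ?_⟩
    intro E E' hE hE' x
    set A := !![E - lam * v (x + n * α), -1; 1, 0] with hA
    set A' := !![E' - lam * v (x + n * α), -1; 1, 0] with hA'
    have e : transferMat lam v α E x (n + 1) - transferMat lam v α E' x (n + 1) =
        A * (transferMat lam v α E x n - transferMat lam v α E' x n) +
        (A - A') * transferMat lam v α E' x n := by
      rw [transferMat, transferMat, Matrix.mul_sub, Matrix.sub_mul]; abel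
    have h1 : matNorm A ≤ |R| + lam * V + 2 := by
      refine (matNorm_step_le _).trans ?_
      have := abs_sub E (lam * v (x + n * α))
      rw [abs_mul, abs_of_pos hlam] at this
      have := mul_le_mul_of_nonneg_left (hV (x + n * α)) hlam.le
      have := le_abs_self R
      linarith
    have h2 : matNorm (A - A') = |E - E'| := by
      simp [matNorm, hA, hA', Fin.sum_univ_two, Real.sqrt_sq_eq_abs]
    have h3 := matNorm_transferMat_le lam v α V |R| hlam hV E' (hE'.trans (le_abs_self R)) x n
    have h4 := h E E' hE hE' x
    rw [e, matNorm_eq_norm]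
    refine (norm_add_le _ _).trans ?_
    simp only [← matNorm_eq_norm]
    have h5 := matNorm_mul_le A (transferMat lam v α E x n - transferMat lam v α E' x n)
    have h6 := matNorm_mul_le (A - A') (transferMat lam v α E' x n)
    rw [h2] at h6
    have h7 : matNorm A * matNorm (transferMat lam v α E x n - transferMat lam v α E' x n) ≤
        (|R| + lam * V + 2) * (L * |E - E'|) :=
      mul_le_mul h1 h4 (Real.sqrt_nonneg _) (by positivity)
    have h8 := mul_le_mul_of_nonneg_left h3 (abs_nonneg (E - E'))
    linarith

/-- The logarithm keeps the Lipschitz bound because all the norms involved are at least `1`. -/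
lemma log_matNorm_lipschitz (lam : ℝ) (v : ℝ → ℝ) (α V R : ℝ) (hlam : 0 < lam)
    (hV : ∀ x, |v x| ≤ V) (n : ℕ) :
    ∃ L : ℝ, 0 ≤ L ∧ ∀ E E' : ℝ, |E| ≤ R → |E'| ≤ R → ∀ x,
      Real.log (matNorm (transferMat lam v α E x n)) ≤
        Real.log (matNorm (transferMat lam v α E' x n)) + L * |E - E'| := by
  obtain ⟨L, hL, h⟩ := transferMat_lipschitz lam v α V R hlam hV n
  refine ⟨L, hL, fun E E' hE hE' x => ?_⟩
  have h0 := h E E' hE hE' x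
  set a := matNorm (transferMat lam v α E' x n) with ha
  set b := matNorm (transferMat lam v α E x n) with hb
  have ha1 : 1 ≤ a := one_le_matNorm_transferMat ..
  have hb1 : 1 ≤ b := one_le_matNorm_transferMat ..
  have hab : b - a ≤ L * |E - E'| := by
    refine le_trans ?_ h0
    rw [ha, hb]
    simp only [matNorm_eq_norm]
    exact norm_sub_norm_le _ _
  have h1 : Real.log b - Real.log a ≤ b / a - 1 := by
    rw [← Real.log_div (by positivity) (by positivity)]
    exact Real.log_le_sub_one_of_pos (by positivity)
  have h2 : b / a - 1 ≤ L * |E - E'| := by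
    have h3 : 0 ≤ L * |E - E'| := by positivity
    rw [sub_le_iff_le_add, div_le_iff₀ (by positivity)]
    nlinarith
  linarith

/-- Subadditivity over one block of length `r` followed by `K` blocks of length `m`. -/
lemma log_matNorm_block (lam : ℝ) (v : ℝ → ℝ) (α E : ℝ) (m r K : ℕ) (x : ℝ) :
    Real.log (matNorm (transferMat lam v α E x (r + K * m))) ≤
      Real.log (matNorm (transferMat lam v α E x r)) +
      ∑ k ∈ Finset.range K,
        Real.log (matNorm (transferMat lam v α E (x + r * α + k * (m * α)) m)) := by
  have hne : ∀ y n, matNorm (transferMat lam v α E y n) ≠ 0 := fun y n =>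
    (zero_lt_one.trans_le (one_le_matNorm_transferMat lam v α E y n)).ne'
  induction K with
  | zero => simp
  | succ K ih =>
    rw [Finset.sum_range_succ, ← add_assoc]
    refine le_trans ?_ (add_le_add_left ih _)
    rw [show r + (K + 1) * m = (r + K * m) + m by ring, transferMat_add, add_comm (Real.log _),
      show x + ((r + K * m : ℕ) : ℝ) * α = x + r * α + K * (m * α) by push_cast; ring,
      ← Real.log_mul (hne _ _) (hne _ _)]
    refine Real.log_le_log ?_ (matNorm_mul_le _ _)
    rw [← show x + ((r + K * m : ℕ) : ℝ) * α = x + r * α + K * (m * α) by push_cast; ring,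
      ← transferMat_add]
    exact zero_lt_one.trans_le (one_le_matNorm_transferMat ..)

lemma abs_potential_le (v : ℝ → ℝ) (γm γp : ℝ) (hγm : 0 < γm) (hγp : 0 < γp)
    (hper : ∀ x : ℝ, v (x + 1) = v x) (hv0 : v 0 = 0)
    (hmono : ∀ x y : ℝ, 0 ≤ x → x ≤ y → y < 1 →
      γm * (y - x) ≤ v y - v x ∧ v y - v x ≤ γp * (y - x)) (x : ℝ) : |v x| ≤ γp := by
  have hP : Function.Periodic v 1 := hper
  have h1 : v x = v (Int.fract x) := by
    have := hP.sub_zsmul_eq (x := x) ⌊x⌋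
    rw [zsmul_one] at this
    exact this.symm
  have h0 := Int.fract_nonneg x
  have h2 := Int.fract_lt_one x
  have h3 := hmono 0 (Int.fract x) le_rfl h0 h2
  rw [hv0, sub_zero, sub_zero] at h3
  rw [h1, abs_le]
  constructor <;> nlinarith

/-- The potential is continuous off the integers; the condition `sin (π x) ≠ 0` says `x ∉ ℤ`. -/
lemma continuousAt_potential (v : ℝ → ℝ) (γm γp : ℝ) (hγm : 0 < γm)
    (hper : ∀ x : ℝ, v (x + 1) = v x)
    (hmono : ∀ x y : ℝ, 0 ≤ x → x ≤ y → y < 1 →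
      γm * (y - x) ≤ v y - v x ∧ v y - v x ≤ γp * (y - x)) (x : ℝ)
    (hx : Real.sin (Real.pi * x) ≠ 0) : ContinuousAt v x := by
  have hP : Function.Periodic v 1 := hper
  have hsub : ∀ y, v (y - ⌊x⌋) = v y := fun y => by
    have := hP.sub_zsmul_eq (x := y) ⌊x⌋
    simpa using this
  have h1 : (⌊x⌋ : ℝ) < x := by
    refine lt_of_le_of_ne (Int.floor_le x) fun h => hx ?_
    rw [← h, mul_comm]; exact Real.sin_int_mul_pi _
  have h2 := Int.lt_floor_add_one x
  have key : ∀ y z : ℝ, (⌊x⌋ : ℝ) < y → y ≤ z → z < ⌊x⌋ + 1 → |v z - v y| ≤ γp * |z - y| := by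
    intro y z hy hyz hz
    have h := hmono (y - ⌊x⌋) (z - ⌊x⌋) (by linarith) (by linarith) (by linarith)
    rw [hsub, hsub] at h
    rw [abs_of_nonneg (sub_nonneg.2 hyz), abs_le]
    have : 0 ≤ γm * (z - y) := mul_nonneg hγm.le (by linarith)
    constructor <;> nlinarith
  refine continuousAt_of_locally_lipschitz (r := min (x - ⌊x⌋) (⌊x⌋ + 1 - x))
    (lt_min (by linarith) (by linarith)) γp fun y hy => ?_
  rw [Real.dist_eq, abs_lt] at hy
  have h3 := min_le_left (x - ⌊x⌋) (⌊x⌋ + 1 - x)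
  have h4 := min_le_right (x - ⌊x⌋) (⌊x⌋ + 1 - x)
  rw [Real.dist_eq, Real.dist_eq]
  rcases le_total x y with hxy | hxy
  · exact key x y h1 hxy (by linarith [hy.2])
  · rw [abs_sub_comm, abs_sub_comm y]
    exact key y x (by linarith [hy.1]) hxy h2

lemma continuousAt_log_matNorm (lam : ℝ) (v : ℝ → ℝ) (α E x : ℝ) (n : ℕ)
    (h : ∀ l < n, ContinuousAt v (x + l * α)) :
    ContinuousAt (fun y => Real.log (matNorm (transferMat lam v α E y n))) x := by
  have hent : ∀ i j, ContinuousAt (fun y => transferMat lam v α E y n i j) x := by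
    induction n with
    | zero => intro i j; simp only [transferMat]; exact continuousAt_const
    | succ n ih =>
      have ih' := ih fun l hl => h l (by omega)
      have hv : ContinuousAt (fun y => v (y + n * α)) x :=
        ContinuousAt.comp (f := fun y : ℝ => y + n * α) (h n (by omega)) (by fun_prop)
      have e0 : ∀ y j, transferMat lam v α E y (n + 1) 0 j =
          (E - lam * v (y + n * α)) * transferMat lam v α E y n 0 j
            - transferMat lam v α E y n 1 j := by
        intro y j
        simp [transferMat, Matrix.mul_apply, Fin.sum_univ_two, sub_eq_add_neg]
      have e1 : ∀ y j, transferMat lam v α E y (n + 1) 1 j = transferMat lam v α E y n 0 j := by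
        intro y j
        simp [transferMat, Matrix.mul_apply, Fin.sum_univ_two]
      intro i j
      fin_cases i
      · simp only [Fin.zero_eta, e0]
        exact ((continuousAt_const.sub (continuousAt_const.mul hv)).mul (ih' 0 j)).sub (ih' 1 j)
      · simp only [Fin.mk_one, e1]
        exact ih' 0 j
  refine ContinuousAt.log ?_ (zero_lt_one.trans_le (one_le_matNorm_transferMat ..)).ne'
  unfold matNorm
  simp only [Fin.sum_univ_two]
  exact Real.continuous_sqrt.continuousAt.comp
    ((((hent 0 0).pow 2).add ((hent 0 1).pow 2)).add (((hent 1 0).pow 2).add ((hent 1 1).pow 2)))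

/-! ### The uniform bound -/

/-- The terms whose infimum is `γ(E)` are nonnegative, so that the infimum is a genuine one. -/
lemma lyap_bddBelow (lam : ℝ) (v : ℝ → ℝ) (α E : ℝ) (n : ℕ+) :
    0 ≤ (1 / (n : ℝ)) *
      ∫ x in (0:ℝ)..1, Real.log (matNorm (transferMat lam v α E x (n : ℕ))) :=
  mul_nonneg (by positivity) (intervalIntegral.integral_nonneg zero_le_one fun x _ =>
    Real.log_nonneg (one_le_matNorm_transferMat ..))

lemma lyap_nonneg (lam : ℝ) (v : ℝ → ℝ) (α E : ℝ) : 0 ≤ lyap lam v α E :=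
  le_ciInf (lyap_bddBelow lam v α E)

/-- Uniform upper bound near a fixed energy `E₀`: `N` and `δ` depend on `E₀` only. The comparison
`γ(E₀) ≤ γ(E) + κ / 4` is where the continuity of `γ` enters. -/
lemma local_upper_bound
    (α lam γm γp : ℝ) (v : ℝ → ℝ)
    (hα : Irrational α) (hlam : 0 < lam) (hγm : 0 < γm) (hγp : 0 < γp)
    (hper : ∀ x : ℝ, v (x + 1) = v x) (hv0 : v 0 = 0)
    (hmono : ∀ x y : ℝ, 0 ≤ x → x ≤ y → y < 1 →
      γm * (y - x) ≤ v y - v x ∧ v y - v x ≤ γp * (y - x))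
    (R κ E₀ : ℝ) (hκ : 0 < κ) (hE₀ : |E₀| ≤ R) :
    ∃ δ > 0, ∃ N : ℕ, ∀ n : ℕ, N < n → ∀ x E : ℝ, |E| ≤ R → |E - E₀| < δ →
      lyap lam v α E₀ ≤ lyap lam v α E + κ / 4 →
      Real.log (matNorm (transferMat lam v α E x n)) ≤ n * (lyap lam v α E + κ) := by
  have hV := abs_potential_le v γm γp hγm hγp hper hv0 hmono
  obtain ⟨m, hm⟩ := exists_lt_of_ciInf_lt
    (show lyap lam v α E₀ < lyap lam v α E₀ + κ / 8 by linarith)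
  have hm0 : 0 < (m : ℕ) := m.pos
  have hmR : (0 : ℝ) < ((m : ℕ) : ℝ) := by exact_mod_cast hm0
  set f : ℝ → ℝ := fun x => Real.log (matNorm (transferMat lam v α E₀ x (m : ℕ))) with hf
  -- `q` vanishes exactly where some `x + lα`, `l < m`, is an integer: the possible jumps of `f`
  set q : ℝ → ℝ := fun x => ∏ l ∈ Finset.range m, |Real.sin (Real.pi * (x + l * α))| with hq
  set B : ℝ := R + lam * γp + 2 with hB
  have hR : 0 ≤ R := (abs_nonneg _).trans hE₀
  have hB1 : 1 ≤ B := by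
    have : 0 ≤ lam * γp := by positivity
    linarith
  have hJ : ∫ x in (0:ℝ)..1, f x < m * (lyap lam v α E₀ + κ / 8) := by
    rw [one_div, inv_mul_lt_iff₀ hmR] at hm
    exact hm
  obtain ⟨g, hgc, hgper, hfg, hgI⟩ := exists_continuous_majorant f q
    (Real.log (2 * B ^ (m : ℕ))) (m * κ / 8) (by positivity)
    (fun x => by
      have h1 := one_le_matNorm_transferMat lam v α E₀ x m
      rw [abs_of_nonneg (Real.log_nonneg h1)]
      exact Real.log_le_log (by linarith)
        (matNorm_transferMat_le lam v α γp R hlam hV E₀ hE₀ x m))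
    (fun x => by simp only [hf, transferMat_periodic lam v hper])
    (by simp only [hq]; fun_prop)
    (fun x => by
      simp only [hq]
      refine Finset.prod_congr rfl fun l _ => ?_
      rw [show Real.pi * (x + 1 + l * α) = Real.pi * (x + l * α) + Real.pi by ring,
        Real.sin_add_pi, abs_neg])
    (fun x => Finset.prod_nonneg fun _ _ => abs_nonneg _)
    (fun x hx => by
      refine continuousAt_log_matNorm lam v α E₀ x m fun l hl => ?_
      refine continuousAt_potential v γm γp hγm hper hmono _ ?_
      have := Finset.prod_ne_zero_iff.1 hx l (Finset.mem_range.2 hl)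
      exact abs_ne_zero.1 this)
    (by
      have hc : (Set.range fun p : ℕ × ℤ => (p.2 : ℝ) - p.1 * α).Countable :=
        Set.countable_range _
      filter_upwards [hc.ae_notMem volume] with x hx hqx
      obtain ⟨l, _, hl⟩ := Finset.prod_eq_zero_iff.1 hqx
      obtain ⟨k, hk⟩ := Real.sin_eq_zero_iff.1 (abs_eq_zero.1 hl)
      refine hx ⟨(l, k), ?_⟩
      have : (k : ℝ) = x + l * α := by
        rw [mul_comm] at hk
        exact mul_left_cancel₀ Real.pi_ne_zero hk
      simp only
      linarith)
  obtain ⟨N₁, hN₁⟩ := weyl_upper (m * α) (hα.natCast_mul hm0.ne') g hgc hgper (m * κ / 8)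
    (by positivity)
  obtain ⟨L, hL, hLip⟩ := log_matNorm_lipschitz lam v α γp R hlam hV m
  set c : ℝ := Real.log (2 * B ^ (m : ℕ)) with hc
  obtain ⟨N₂, hN₂⟩ := exists_nat_ge (4 * c / κ)
  -- this `δ` makes the change of each block, `L * |E - E₀|`, at most `m * κ / 8`
  refine ⟨m * κ / 8 / (L + 1), by positivity, max (m * N₁) N₂, fun n hn x E hE hEE hγ => ?_⟩
  have hn1 : (m : ℕ) * N₁ ≤ n := (le_max_left _ _).trans hn.le
  have hn2 : (N₂ : ℝ) ≤ n := by exact_mod_cast (le_max_right _ _).trans hn.le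
  set K := n / m with hK
  set r := n % m with hr
  have hnK : r + K * m = n := by rw [hr, hK, mul_comm]; exact Nat.mod_add_div n m
  have hKN : N₁ ≤ K := (Nat.le_div_iff_mul_le hm0).2 (by rw [mul_comm]; exact hn1)
  have hrem : Real.log (matNorm (transferMat lam v α E x r)) ≤ n * (κ / 4) := by
    have h1 := one_le_matNorm_transferMat lam v α E x r
    have h2 : Real.log (matNorm (transferMat lam v α E x r)) ≤ c := by
      refine Real.log_le_log (by linarith)
        ((matNorm_transferMat_le lam v α γp R hlam hV E hE x r).trans ?_)
      have : B ^ r ≤ B ^ (m : ℕ) := pow_le_pow_right₀ hB1 (Nat.mod_lt n hm0).le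
      linarith
    rw [div_le_iff₀ hκ] at hN₂
    nlinarith
  have hEL : L * |E - E₀| ≤ m * κ / 8 := by
    rw [lt_div_iff₀ (by positivity)] at hEE
    nlinarith [abs_nonneg (E - E₀)]
  have hsum : ∑ k ∈ Finset.range K,
      Real.log (matNorm (transferMat lam v α E (x + r * α + k * (m * α)) m)) ≤
      K * (m * (lyap lam v α E₀ + κ / 2)) := by
    calc _ ≤ ∑ k ∈ Finset.range K, (g (x + r * α + k * (m * α)) + m * κ / 8) := by
          refine Finset.sum_le_sum fun k _ => ?_
          have h1 := hLip E E₀ hE hE₀ (x + r * α + k * (m * α))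
          have h2 := hfg (x + r * α + k * (m * α))
          simp only [hf] at h2
          linarith
      _ = ∑ k ∈ Finset.range K, g (x + r * α + k * (m * α)) + K * (m * κ / 8) := by
          rw [Finset.sum_add_distrib]; simp
      _ ≤ K * ((∫ y in (0:ℝ)..1, g y) + m * κ / 8) + K * (m * κ / 8) := by
          have := hN₁ K hKN (x + r * α)
          linarith
      _ ≤ K * (m * (lyap lam v α E₀ + κ / 2)) := by
          rw [← mul_add]
          refine mul_le_mul_of_nonneg_left ?_ (Nat.cast_nonneg K)
          linarith
  have hblock := log_matNorm_block lam v α E m r K x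
  rw [hnK] at hblock
  have hKm : (K : ℝ) * m ≤ n := by
    have : K * m ≤ n := by omega
    exact_mod_cast this
  have h0 := lyap_nonneg lam v α E
  have h1 : (K : ℝ) * (m * (lyap lam v α E₀ + κ / 2)) ≤ n * (lyap lam v α E + 3 * κ / 4) := by
    rw [← mul_assoc]
    refine mul_le_mul hKm (by linarith) ?_ (Nat.cast_nonneg n)
    have := lyap_nonneg lam v α E₀
    linarith
  linarith

/-- uniform upper bound `|P_n(x,E)| ≤ e^{n(γ(E) + κ)}` on intervals where
`γ` is continuous. -/
theorem determinant_uniform_upper_bound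
    (α lam γm γp : ℝ) (v : ℝ → ℝ)
    (hα : Irrational α) (hlam : 0 < lam) (hγm : 0 < γm) (hγp : 0 < γp)
    (hper : ∀ x : ℝ, v (x + 1) = v x) (hv0 : v 0 = 0)
    (hmono : ∀ x y : ℝ, 0 ≤ x → x ≤ y → y < 1 →
      γm * (y - x) ≤ v y - v x ∧ v y - v x ≤ γp * (y - x))
    (E₁ E₂ κ : ℝ)
    (hcont : ContinuousOn (fun E : ℝ => lyap lam v α E) (Set.Icc E₁ E₂))
    (hκ : 0 < κ) :
    ∃ N : ℕ, ∀ n : ℕ, N < n → ∀ x : ℝ, ∀ E ∈ Set.Icc E₁ E₂,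
      |detP lam v α n x E| ≤ Real.exp ((n : ℝ) * (lyap lam v α E + κ)) := by
  have hR : ∀ E ∈ Set.Icc E₁ E₂, |E| ≤ max |E₁| |E₂| := fun E hE =>
    abs_le_max_abs_abs hE.1 hE.2
  refine isCompact_Icc.induction_on (p := fun s => ∃ N : ℕ, ∀ n : ℕ, N < n → ∀ x : ℝ, ∀ E ∈ s,
      |detP lam v α n x E| ≤ Real.exp ((n : ℝ) * (lyap lam v α E + κ))) ?_ ?_ ?_ ?_
  · exact ⟨0, fun _ _ _ _ h => h.elim⟩
  · rintro s t hst ⟨N, hN⟩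
    exact ⟨N, fun n hn x E hE => hN n hn x E (hst hE)⟩
  · rintro s t ⟨N, hN⟩ ⟨N', hN'⟩
    refine ⟨max N N', fun n hn x E hE => ?_⟩
    rcases hE with hE | hE
    · exact hN n ((le_max_left _ _).trans_lt hn) x E hE
    · exact hN' n ((le_max_right _ _).trans_lt hn) x E hE
  · intro E₀ hE₀
    obtain ⟨δ, hδ, N, hN⟩ := local_upper_bound α lam γm γp v hα hlam hγm hγp hper hv0 hmono
      (max |E₁| |E₂|) κ E₀ hκ (hR E₀ hE₀)
    have h1 : ∀ᶠ E in nhdsWithin E₀ (Set.Icc E₁ E₂),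
        lyap lam v α E₀ - κ / 4 < lyap lam v α E :=
      (hcont E₀ hE₀).eventually (lt_mem_nhds (by linarith))
    have h2 : ∀ᶠ E in nhdsWithin E₀ (Set.Icc E₁ E₂), |E - E₀| < δ :=
      mem_nhdsWithin_of_mem_nhds (Metric.ball_mem_nhds E₀ hδ)
    refine ⟨_, (h1.and (h2.and self_mem_nhdsWithin)), N, fun n hn x E hE => ?_⟩
    obtain ⟨hE1, hE2, hE3⟩ := hE
    refine (abs_detP_le lam v α E n x).trans ?_
    have hpos := zero_lt_one.trans_le (one_le_matNorm_transferMat lam v α E x n)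
    rw [← Real.log_le_iff_le_exp hpos]
    exact hN n hn x E (hR E hE3) hE2 (by linarith)

end
end
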